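/- Uniform local connectedness of the level set (Step 1 in the proof of Lemma A.2): Let H:ℝ^m→ℝ be a C² function with Σ:=H⁻¹(0) nonempty, inf_{x∈Σ}‖∇H(x)‖>0 and sup_{x∈ℝ^m}‖D²H_x‖≤M for some 0<M<∞. Then for every x∈Σ the intersection B(x, (1/M)·inf_{z∈Σ}‖∇H(z)‖) ∩ Σ is connected, i.e. has exactly one connected component. -/

import Mathlib

open Set

noncomputable section

/-!
If `ball x r ∩ Σ` were disconnected, it would contain a point `y ≠ x` at which the distance to `x`
has a local minimum on `Σ`, namely the point nearest to `x` of the part of `Σ` away from `x`. By the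
Lagrange multiplier rule `∇H y` is parallel to `y - x`, so the first-order Taylor expansion of `H`
at `y`, evaluated at `x`, reads `‖∇H y‖ ‖y - x‖ ≤ (M / 2) ‖y - x‖ ^ 2`. Hence such a `y` lies
at distance at least `(2 / M) ‖∇H y‖` from `x`.
-/

open Metric Topology
open scoped NNReal

section Connectedness

variable {X : Type*} [PseudoMetricSpace X] [ProperSpace X] {s u v : Set X} {x : X} {r : ℝ}

lemma ball_inter_subset_of_forall_isLocalMinOn_dist_eq (hs : IsClosed s)
    (hmin : ∀ y ∈ ball x r ∩ s, IsLocalMinOn (dist x) s y → y = x) (hu : IsOpen u) (hv : IsOpen v)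
    (hcover : ball x r ∩ s ⊆ u ∪ v) (hdisj : ball x r ∩ s ∩ (u ∩ v) = ∅) (hxu : x ∈ u) :
    ball x r ∩ s ⊆ u := by
  by_contra hsub
  obtain ⟨y, ⟨hyr, hys⟩, hyu⟩ := not_subset.1 hsub
  obtain ⟨w, ⟨hws, hwu⟩, hw⟩ :=
    (hs.sdiff hu).exists_infDist_eq_dist ⟨y, hys, hyu⟩ x
  have hnearest : ∀ z ∈ s \ u, dist x w ≤ dist x z := fun z hz => hw ▸ infDist_le_dist_of_mem hz
  have hwr : w ∈ ball x r := mem_ball'.2 ((hnearest y ⟨hys, hyu⟩).trans_lt (mem_ball'.1 hyr))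
  have hwv : w ∈ v := (hcover ⟨hwr, hws⟩).resolve_left hwu
  have hnear : ball x r ∩ v ∈ 𝓝[s] w :=
    mem_nhdsWithin_of_mem_nhds ((isOpen_ball.inter hv).mem_nhds ⟨hwr, hwv⟩)
  have hlocal : IsLocalMinOn (dist x) s w := by
    filter_upwards [hnear, self_mem_nhdsWithin] with z ⟨hzr, hzv⟩ hzs
    exact hnearest z ⟨hzs, fun hzu => eq_empty_iff_forall_notMem.1 hdisj z ⟨⟨hzr, hzs⟩, hzu, hzv⟩⟩
  exact hwu (hmin w ⟨hwr, hws⟩ hlocal ▸ hxu)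

theorem isConnected_ball_inter_of_forall_isLocalMinOn_dist_eq (hs : IsClosed s) (hx : x ∈ s)
    (hr : 0 < r) (hmin : ∀ y ∈ ball x r ∩ s, IsLocalMinOn (dist x) s y → y = x) :
    IsConnected (ball x r ∩ s) := by
  have hxs : x ∈ ball x r ∩ s := ⟨mem_ball_self hr, hx⟩
  refine ⟨⟨x, hxs⟩, isPreconnected_iff_subset_of_disjoint.2 fun u v hu hv hcover hdisj => ?_⟩
  refine (hcover hxs).imp
    (ball_inter_subset_of_forall_isLocalMinOn_dist_eq hs hmin hu hv hcover hdisj) ?_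
  rw [union_comm] at hcover
  rw [inter_comm u] at hdisj
  exact ball_inter_subset_of_forall_isLocalMinOn_dist_eq hs hmin hv hu hcover hdisj

end Connectedness

section Taylor

variable {E F : Type*} [NormedAddCommGroup E] [NormedSpace ℝ E] [NormedAddCommGroup F]
  [NormedSpace ℝ F] {f : E → F} {K : ℝ≥0}

lemma lipschitzWith_fderiv_of_norm_iteratedFDeriv_two_le (hf : ContDiff ℝ 2 f)
    (hK : ∀ x, ‖iteratedFDeriv ℝ 2 f x‖ ≤ K) : LipschitzWith K (fderiv ℝ f) := by
  have hf' : Differentiable ℝ (fderiv ℝ f) :=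
    (hf.fderiv_right (m := 1) one_add_one_eq_two.le).differentiable one_ne_zero
  refine lipschitzWith_of_nnnorm_fderiv_le hf' fun x => NNReal.coe_le_coe.1 ?_
  rw [coe_nnnorm, ← norm_iteratedFDeriv_one, norm_iteratedFDeriv_fderiv]
  exact hK x

theorem norm_sub_sub_fderiv_le_of_lipschitzWith_fderiv (hf : Differentiable ℝ f)
    (hK : LipschitzWith K (fderiv ℝ f)) (x y : E) :
    ‖f y - f x - fderiv ℝ f x (y - x)‖ ≤ K / 2 * ‖y - x‖ ^ 2 := by
  set v := y - x
  let g : ℝ → F := fun t => f (x + t • v) - f x - t • fderiv ℝ f x v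
  have hg (t : ℝ) : HasDerivAt g (fderiv ℝ f (x + t • v) v - fderiv ℝ f x v) t := by
    have hline : HasDerivAt (fun t : ℝ => x + t • v) v t := by
      simpa only [one_smul] using ((hasDerivAt_id' t).smul_const v).const_add x
    have hlinear : HasDerivAt (fun t : ℝ => t • fderiv ℝ f x v) (fderiv ℝ f x v) t := by
      simpa only [one_smul] using (hasDerivAt_id' t).smul_const (fderiv ℝ f x v)
    exact (((hf _).hasFDerivAt.comp_hasDerivAt t hline).sub_const (f x)).sub hlinear
  have hB (t : ℝ) : HasDerivAt (fun t => K / 2 * ‖v‖ ^ 2 * t ^ 2) (K * ‖v‖ ^ 2 * t) t := by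
    refine ((hasDerivAt_pow 2 t).const_mul (K / 2 * ‖v‖ ^ 2)).congr_deriv ?_
    push_cast
    ring
  have hbound (t : ℝ) (ht : t ∈ Ico (0 : ℝ) 1) :
      ‖fderiv ℝ f (x + t • v) v - fderiv ℝ f x v‖ ≤ K * ‖v‖ ^ 2 * t :=
    calc ‖(fderiv ℝ f (x + t • v) - fderiv ℝ f x) v‖
        ≤ ‖fderiv ℝ f (x + t • v) - fderiv ℝ f x‖ * ‖v‖ := ContinuousLinearMap.le_opNorm _ _
      _ ≤ K * ‖x + t • v - x‖ * ‖v‖ := by gcongr; exact hK.norm_sub_le _ _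
      _ = K * ‖v‖ ^ 2 * t := by
        rw [add_sub_cancel_left, norm_smul, Real.norm_of_nonneg ht.1]; ring
  have hg1 := image_norm_le_of_norm_deriv_right_le_deriv_boundary
    (fun t _ => (hg t).continuousAt.continuousWithinAt) (fun t _ => (hg t).hasDerivWithinAt)
    (by simp [g]) hB hbound (right_mem_Icc.2 zero_le_one)
  simpa [g, v] using hg1

end Taylor

section LevelSet

variable {E : Type*} [NormedAddCommGroup E] [InnerProductSpace ℝ E] {f : E → ℝ} {K : ℝ≥0} {x y : E}

theorem exists_eq_smul_innerSL_of_isLocalMinOn_dist [CompleteSpace E] {f' : StrongDual ℝ E}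
    (hf : HasStrictFDerivAt f f' y) (hyx : y ≠ x)
    (hmin : IsLocalMinOn (dist x) {z | f z = f y} y) :
    ∃ c : ℝ, f' = c • innerSL ℝ (y - x) := by
  have hmin_sq : IsLocalMinOn (fun z => ‖z - x‖ ^ 2) {z | f z = f y} y := by
    filter_upwards [hmin] with z hz
    simp only [← dist_eq_norm']
    gcongr
  have hsq : HasStrictFDerivAt (fun z => ‖z - x‖ ^ 2) (2 • innerSL ℝ (y - x)) y :=
    (hasStrictFDerivAt_norm_sq (y - x)).comp y ((hasStrictFDerivAt_id y).sub_const x)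
  obtain ⟨a, b, hab, hlin⟩ :=
    IsLocalExtrOn.exists_multipliers_of_hasStrictFDerivAt_1d (Or.inl hmin_sq) hf hsq
  have hinner : innerSL ℝ (y - x) ≠ 0 := by
    rwa [ne_eq, ← norm_eq_zero, innerSL_apply_norm, norm_eq_zero, sub_eq_zero]
  have ha : a ≠ 0 := by
    rintro rfl
    have hb : b ≠ 0 := by rintro rfl; exact hab rfl
    rw [zero_smul, zero_add, ← Nat.cast_smul_eq_nsmul ℝ, Nat.cast_ofNat] at hlin
    exact smul_ne_zero hb (smul_ne_zero two_ne_zero hinner) hlin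
  refine ⟨-(a⁻¹ * b * 2), ?_⟩
  calc f' = a⁻¹ • a • f' := (inv_smul_smul₀ ha f').symm
    _ = a⁻¹ • -(b • 2 • innerSL ℝ (y - x)) := by rw [eq_neg_of_add_eq_zero_left hlin]
    _ = -(a⁻¹ * b * 2) • innerSL ℝ (y - x) := by module

theorem two_mul_norm_fderiv_le_of_isLocalMinOn_dist [CompleteSpace E] (hf : Differentiable ℝ f)
    (hK : LipschitzWith K (fderiv ℝ f)) (hfx : f x = f y) (hyx : y ≠ x)
    (hmin : IsLocalMinOn (dist x) {z | f z = f y} y) :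
    2 * ‖fderiv ℝ f y‖ ≤ K * dist y x := by
  have hstrict : HasStrictFDerivAt f (fderiv ℝ f y) y :=
    hasStrictFDerivAt_of_hasFDerivAt_of_continuousAt (.of_forall fun z => (hf z).hasFDerivAt)
      hK.continuous.continuousAt
  obtain ⟨c, hc⟩ := exists_eq_smul_innerSL_of_isLocalMinOn_dist hstrict hyx hmin
  have hparallel : ‖fderiv ℝ f y (x - y)‖ = ‖fderiv ℝ f y‖ * ‖x - y‖ := by
    rw [hc, ← neg_sub y x, map_neg, norm_neg, norm_neg, smul_apply, norm_smul, norm_smul,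
      innerSL_apply_norm, innerSL_apply_apply, real_inner_self_eq_norm_mul_norm,
      norm_mul, norm_norm, mul_assoc]
  have htaylor := norm_sub_sub_fderiv_le_of_lipschitzWith_fderiv hf hK y x
  rw [hfx, sub_self, zero_sub, norm_neg, hparallel] at htaylor
  have hpos : 0 < ‖x - y‖ := norm_sub_pos_iff.2 hyx.symm
  rw [dist_eq_norm']
  refine le_of_mul_le_mul_right ?_ hpos
  linarith

-- The factor `2` is optimal: take `H t = (t ^ 2 - 1) / 2` on `ℝ`, with `K = 1` and `Σ = {-1, 1}`.
theorem level_set_uniformly_locally_connected_general [FiniteDimensional ℝ E] {H : E → ℝ}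
    (hH : Differentiable ℝ H) (hK : LipschitzWith K (fderiv ℝ H)) (hK0 : 0 < K) {c : ℝ}
    (hx : H x = c) {r : ℝ} (hr : 0 < r)
    (hrK : r ≤ 2 / K * sInf ((fun z => ‖gradient H z‖) '' (H ⁻¹' {c}))) :
    IsConnected (ball x r ∩ H ⁻¹' {c}) := by
  refine isConnected_ball_inter_of_forall_isLocalMinOn_dist_eq
    (isClosed_singleton.preimage hH.continuous) hx hr fun y ⟨hyr, hy⟩ hmin => ?_
  by_contra hyx
  have hsInf : sInf ((fun z => ‖gradient H z‖) '' (H ⁻¹' {c})) ≤ ‖gradient H y‖ :=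
    csInf_le ⟨0, forall_mem_image.2 fun z _ => norm_nonneg _⟩ (mem_image_of_mem _ hy)
  have hcrit : 2 * ‖gradient H y‖ ≤ K * dist y x := by
    rw [gradient, LinearIsometryEquiv.norm_map]
    rw [← show H y = c from hy] at hx hmin
    exact two_mul_norm_fderiv_le_of_isLocalMinOn_dist hH hK hx hyx hmin
  have hKpos : (0 : ℝ) < K := hK0
  refine (mem_ball.1 hyr).not_ge ?_
  calc r ≤ 2 / K * ‖gradient H y‖ := by grw [hrK, hsInf]
    _ = 2 * ‖gradient H y‖ / K := by ring
    _ ≤ dist y x := (div_le_iff₀' hKpos).2 hcrit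

end LevelSet

/-- **Step 1 in the proof of Lemma A.2 (uniform local connectedness of the level set).**
For every `x ∈ Σ = H⁻¹(0)`, the intersection of `Σ` with the ball of radius
`(1/M)·inf_Σ‖∇H‖` centred at `x` has exactly one connected component. -/
theorem level_set_uniformly_locally_connected {m : ℕ}
    (H : EuclideanSpace ℝ (Fin m) → ℝ) (hH : ContDiff ℝ 2 H)
    (hne : (H ⁻¹' {0}).Nonempty)
    (hgrad : 0 < sInf ((fun x => ‖gradient H x‖) '' (H ⁻¹' {0})))
    (M : ℝ) (hM : 0 < M) (hMfin : ∀ x, ‖iteratedFDeriv ℝ 2 H x‖ ≤ M) :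
    ∀ x, H x = 0 →
      IsConnected
        (Metric.ball x ((1 / M) * sInf ((fun z => ‖gradient H z‖) '' (H ⁻¹' {0})))
          ∩ H ⁻¹' {0}) := by
  lift M to ℝ≥0 using hM.le
  exact fun x hx => level_set_uniformly_locally_connected_general (hH.differentiable two_ne_zero)
    (lipschitzWith_fderiv_of_norm_iteratedFDeriv_two_le hH hMfin) hM hx (by positivity)
    (by gcongr; exact one_le_two)
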